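/- Let (X,T) be the Pacman cellular automaton, let w be a finite word over A of length m, let x = ... 0 0 . w D 0 0 ... (x_j = w_j for 0 ≤ j ≤ m − 1, x_m = D, x_j = 0 otherwise), and for each i ≥ 0 let y^i = ... 0 0 . w D 0^i K 0 0 ... (y^i_j = w_j for 0 ≤ j ≤ m − 1, y^i_m = D, y^i_{m+1+i} = K, y^i_j = 0 otherwise). Then there exist N, M ≥ 0 such that d(T^{N+j} x, T^{N+j} y^{M+j}) = 1 for all j ≥ 0; in particular x and each y^{M+j} agree on coordinates [0, m] but their orbits separate to distance 1 at time N + j. -/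

import Mathlib

/-!
Doors never move, and door `m` stops everything coming from the left, so in the orbit of
`x = ⋯0.wD0⋯` nothing ever lives to the right of `m`. Three facts give the theorem.

* *Cleaning.* Every particle arising in one step descends from a particle of the previous step with
  strictly larger potential `pot`, a bound on the time a particle needs to leave `[0, m]`: a ghost
  `G` runs left to the nearest door, returns as `P`, turns into a keymaster `K` at the door on its
  right, runs left again and now crosses the door. Hence after some time `N₀` the orbit of `x` is,
  on coordinates `≥ 0`, the fixed configuration `base` consisting of the doors only (`cleaning`).
* *Transport.* The extra `K` of `y^i` travels left at unit speed and arrives at `m + 1` at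
  time `i`, the rest being the orbit of `x` (`iterate_xPt`). For `i ≥ N₀` this is, on coordinates
  `≥ 0`, the configuration `base` with one additional `K` at `m + 1`.
* *Passage.* A single keymaster in the configuration `base` crosses all doors and changes the
  coordinate `0` after a number `C` of steps that depends on the doors only (`hits_keymaster`).

So `M = N₀` and `N = N₀ + C` work. Coordinates `< 0` only carry left-moving symbols, which never
influence coordinates `≥ 0`; this is the role of `HalfEq`.
-/

/-- The six-letter alphabet of the Pacman cellular automaton:
`O` = empty space, `D` = empty door, `P` = pacman, `G` = ghost,
`K` = keymaster ghost, `E` = door with ghost. -/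
inductive PacSym : Type
  | O | D | P | G | K | E
  deriving DecidableEq

open PacSym

/-- The radius-1 local rule `f(a,b,c)` of the Pacman cellular automaton. -/
def pacRule (a b c : PacSym) : PacSym :=
  if ((a = O ∨ a = G ∨ a = K) ∧
        (((b = O ∨ b = G ∨ b = K) ∧ (c = O ∨ c = D ∨ c = P)) ∨
          (b = P ∧ ¬(c = D ∨ c = E)))) ∨
      ((a = D ∨ a = E) ∧
        (((b = O ∨ b = K) ∧ (c = O ∨ c = D ∨ c = P)) ∨
          (b = P ∧ ¬(c = D ∨ c = E)))) then O
  else if (b = D ∨ b = E) ∧ ¬(c = K ∨ c = E) then D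
  else if ((a = O ∨ a = G ∨ a = K) ∧ (b = O ∨ b = G ∨ b = K) ∧ (c = G ∨ c = E)) ∨
      ((a = D ∨ a = E) ∧ (b = O ∨ b = K) ∧ c = E) then G
  else if (c = K ∧ (((a = O ∨ a = G ∨ a = K) ∧ (b = O ∨ b = G ∨ b = K)) ∨
        ((a = D ∨ a = E) ∧ (b = O ∨ b = K)))) ∨
      (a = P ∧ ¬(b = D ∨ b = E) ∧ (c = D ∨ c = E)) ∨
      (b = P ∧ (c = D ∨ c = E)) then K
  else if (a = D ∧ (((b = O ∨ b = K) ∧ c = G) ∨ b = G)) ∨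
      (a = P ∧ ¬(b = D ∨ b = E) ∧ ¬(c = D ∨ c = E)) then P
  else if (b = D ∨ b = E) ∧ (c = K ∨ c = E) then E
  else O

/-- The full shift `X = A^ℤ` over the Pacman alphabet. -/
abbrev PacX : Type := ℤ → PacSym

/-- The Pacman cellular automaton `T : X → X`, `(Tx)_i = f(x_{i-1}, x_i, x_{i+1})`. -/
def pacT (x : PacX) : PacX := fun i => pacRule (x (i - 1)) (x i) (x (i + 1))

open Classical in
/-- The metric `d(x,y) = 2^{-min{|j| : x_j ≠ y_j}}` for `x ≠ y`, and `0` otherwise. -/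
noncomputable def pdist (x y : PacX) : ℝ :=
  if x = y then 0
  else (2 : ℝ) ^ (-((sInf {n : ℕ | ∃ j : ℤ, j.natAbs = n ∧ x j ≠ y j} : ℕ) : ℤ))

/-- The open ball `B_δ(x) = {y : d(x,y) < δ}`. -/
def pball (x : PacX) (δ : ℝ) : Set PacX := {y | pdist x y < δ}

/-- The diameter of a set: `diam S = sup {d(a,b) : a, b ∈ S}`. -/
noncomputable def pdiam (S : Set PacX) : ℝ := sSup (Set.image2 pdist S S)

/-- The point `x^{w,i} = ⋯0 0.w D 0^i K 0 0⋯`. -/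
def xPt (w : List PacSym) (i : ℕ) : PacX := fun j =>
  if 0 ≤ j ∧ j < (w.length : ℤ) then w.getD j.toNat O
  else if j = (w.length : ℤ) then D
  else if j = (w.length : ℤ) + 1 + (i : ℤ) then K
  else O

/-- The point `x^{w} = ⋯0 0.w D 0 0⋯`. -/
def yPt (w : List PacSym) : PacX := fun j =>
  if 0 ≤ j ∧ j < (w.length : ℤ) then w.getD j.toNat O
  else if j = (w.length : ℤ) then D
  else O

/-! ### Local facts about the rule -/

/-- The symbol is a door, empty or occupied. -/
def dr (s : PacSym) : Bool := s = D ∨ s = E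

/-- The symbol is empty space or a left-moving ghost; these never influence the cell on their
right. -/
def lm (s : PacSym) : Prop := s = O ∨ s = G ∨ s = K

instance (s : PacSym) : Decidable (lm s) := by unfold lm; infer_instance

lemma dr_rule (a b c : PacSym) : dr (pacRule a b c) = dr b := by
  cases a <;> cases b <;> cases c <;> decide

lemma lm_rule (a b c : PacSym) (ha : lm a) (hb : lm b) : lm (pacRule a b c) := by
  revert ha hb
  cases a <;> cases b <;> cases c <;> decide

lemma rule_congr_left (a a' b c : PacSym) (ha : lm a) (ha' : lm a') :
    pacRule a b c = pacRule a' b c := by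
  rcases ha with rfl | rfl | rfl <;> rcases ha' with rfl | rfl | rfl <;>
    cases b <;> cases c <;> decide

lemma rule_eq_K (a b c : PacSym) (h : pacRule a b c = K) :
    dr b = false ∧ (c = K ∨ a = P ∨ b = P) := by
  revert h
  cases a <;> cases b <;> cases c <;> decide

lemma rule_eq_P (a b c : PacSym) (h : pacRule a b c = P) :
    dr b = false ∧ (c = G ∨ a = P ∨ b = G) := by
  revert h
  cases a <;> cases b <;> cases c <;> decide

lemma rule_eq_G (a b c : PacSym) (h : pacRule a b c = G) : c = G ∨ c = E := by
  revert h
  cases a <;> cases b <;> cases c <;> decide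

lemma rule_eq_E (a b c : PacSym) (h : pacRule a b c = E) : c = K ∨ c = E := by
  revert h
  cases a <;> cases b <;> cases c <;> decide

/-! ### Configurations bounded by a door on the right -/

/-- Shape of all configurations in the orbit of `⋯0.wD0⋯` with `m = |w|`. -/
structure Good (m : ℤ) (u : PacX) : Prop where
  neg : ∀ i < 0, lm (u i)
  door : u m = D
  right : ∀ i, m < i → u i = O

lemma Good.step {m : ℤ} {u : PacX} (h : Good m u) : Good m (pacT u) where
  neg i hi := lm_rule _ _ _ (h.neg _ (by lia)) (h.neg _ hi)
  door := by
    simp only [pacT, h.door, h.right (m + 1) (by lia)]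
    cases u (m - 1) <;> decide
  right i hi := by
    simp only [pacT, h.right i hi, h.right (i + 1) (by lia)]
    rcases eq_or_lt_of_le (show m ≤ i - 1 by lia) with e | e
    · rw [← e, h.door]; decide
    · rw [h.right _ e]; decide

lemma Good.iterate {m : ℤ} {u : PacX} (h : Good m u) (t : ℕ) : Good m (pacT^[t] u) := by
  induction t with
  | zero => exact h
  | succ t ih => rw [Function.iterate_succ_apply']; exact ih.step

lemma dr_iterate (u : PacX) (t : ℕ) (i : ℤ) : dr (pacT^[t] u i) = dr (u i) := by
  induction t with
  | zero => rfl
  | succ t ih => rw [Function.iterate_succ_apply', pacT, dr_rule, ih]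

lemma good_yPt (w : List PacSym) : Good (w.length : ℤ) (yPt w) where
  neg i hi := by
    left; unfold yPt; rw [if_neg (by lia), if_neg (by lia)]
  door := by
    unfold yPt; rw [if_neg (by lia), if_pos rfl]
  right i hi := by
    unfold yPt; rw [if_neg (by lia), if_neg (by lia)]

/-- The configuration in which every door of `u` is empty and every other cell is empty space. -/
def base (u : PacX) : PacX := fun i => if dr (u i) then D else O

lemma base_cases (u : PacX) (i : ℤ) : base u i = O ∨ base u i = D := by
  unfold base; split <;> simp

/-! ### Cleaning -/

/-- The number of doors of `u` in `[0, p]`. -/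
def doors (u : PacX) (p : ℤ) : ℤ := ∑ i ∈ Finset.range (p + 1).toNat, if dr (u i) then 1 else 0

lemma doors_succ (u : PacX) (p : ℤ) (hp : -1 ≤ p) :
    doors u (p + 1) = doors u p + if dr (u (p + 1)) then 1 else 0 := by
  unfold doors
  have h : (p + 1 + 1).toNat = (p + 1).toNat + 1 := by lia
  have h' : (((p + 1).toNat : ℕ) : ℤ) = p + 1 := by lia
  rw [h, Finset.sum_range_succ, h']

lemma doors_nonneg (u : PacX) (p : ℤ) : 0 ≤ doors u p :=
  Finset.sum_nonneg fun i _ => by split <;> simp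

/-- The potential of the symbol `s` at position `p ∈ [0, m]`, when `δ` doors lie in `[0, p]`. It
orders the life of a particle: first by the number of doors still to be crossed, then by phase
(`G` before `P` before `K` or `E`), then by the distance to be travelled. -/
def pot (m δ : ℤ) (s : PacSym) (p : ℤ) : ℤ :=
  3 * (m + 1) * δ +
    match s with
    | G => 2 * (m + 1) + p
    | P => (m + 1) + (m - p)
    | _ => p

/-- The largest potential of a particle in `[0, m]` drops by at least one in each step. -/
lemma pot_step {m : ℤ} {u v : PacX} (h : Good m u) (hd : ∀ i, dr (u i) = dr (v i)) (B : ℤ)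
    (hB : ∀ p, 0 ≤ p → p ≤ m → u p ≠ O → u p ≠ D → pot m (doors v p) (u p) p ≤ B)
    (p : ℤ) (h0 : 0 ≤ p) (hm : p ≤ m) (hO : pacT u p ≠ O) (hD : pacT u p ≠ D) :
    pot m (doors v p) (pacT u p) p ≤ B - 1 := by
  have hc : u (p + 1) ≠ O → p + 1 ≤ m := fun hne => by
    by_contra hlt; exact hne (h.right _ (by lia))
  have ha : u (p - 1) = P → 0 ≤ p - 1 := fun he => by
    by_contra hlt
    have := h.neg (p - 1) (by lia)
    rw [he] at this; revert this; decide
  have B1 := hB p h0 hm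
  have B2 := fun hne => hB (p + 1) (by lia) (hc hne) hne
  have B0 := fun he => hB (p - 1) (ha he) (by lia)
  have d1 := doors_succ v p (by lia)
  have d0 := doors_succ v (p - 1) (by lia)
  rw [sub_add_cancel] at d0
  rw [← hd] at d0 d1
  have hs : pacRule (u (p - 1)) (u p) (u (p + 1)) = pacT u p := rfl
  cases hx : pacT u p with
  | O => exact absurd hx hO
  | D => exact absurd hx hD
  | P =>
    rw [hx] at hs
    obtain ⟨hb, hc | hc | hc⟩ := rule_eq_P _ _ _ hs
    · simp [hc, dr] at d1 B2
      rw [d1] at B2; simp only [pot] at B2 ⊢; lia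
    · simp [hc, hb] at d0 B0
      rw [d0]; simp only [pot] at B0 ⊢; lia
    · simp [hc] at B1
      simp only [pot] at B1 ⊢; lia
  | K =>
    rw [hx] at hs
    obtain ⟨hb, hc | hc | hc⟩ := rule_eq_K _ _ _ hs
    · simp [hc, dr] at d1 B2
      rw [d1] at B2; simp only [pot] at B2 ⊢; lia
    · simp [hc, hb] at d0 B0
      rw [d0]; simp only [pot] at B0 ⊢; lia
    · simp [hc] at B1
      simp only [pot] at B1 ⊢; lia
  | G =>
    rw [hx] at hs
    rcases rule_eq_G _ _ _ hs with hc | hc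
    · simp [hc, dr] at d1 B2
      rw [d1] at B2; simp only [pot] at B2 ⊢; lia
    · simp [hc, dr] at d1 B2
      rw [d1] at B2; simp only [pot] at B2 ⊢; lia
  | E =>
    rw [hx] at hs
    rcases rule_eq_E _ _ _ hs with hc | hc
    · simp [hc, dr] at d1 B2
      rw [d1] at B2; simp only [pot] at B2 ⊢; lia
    · simp [hc, dr] at d1 B2
      rw [d1] at B2; simp only [pot] at B2 ⊢; lia

lemma pot_nonneg {m δ p : ℤ} (s : PacSym) (hδ : 0 ≤ δ) (h0 : 0 ≤ p) (hm : p ≤ m) :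
    0 ≤ pot m δ s p := by
  have : 0 ≤ 3 * (m + 1) * δ := mul_nonneg (by lia) hδ
  cases s <;> simp only [pot] <;> lia

/-- From some time on, only empty doors and empty space remain on coordinates `≥ 0`. -/
lemma cleaning {m : ℤ} {u : PacX} (h : Good m u) :
    ∃ N : ℕ, ∀ t, N ≤ t → ∀ i, 0 ≤ i → pacT^[t] u i = base u i := by
  obtain ⟨B, hB⟩ := ((Set.finite_Icc 0 m).image fun p => pot m (doors u p) (u p) p).bddAbove
  have key : ∀ t : ℕ, ∀ p, 0 ≤ p → p ≤ m → pacT^[t] u p ≠ O → pacT^[t] u p ≠ D →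
      pot m (doors u p) (pacT^[t] u p) p ≤ B - t := by
    intro t
    induction t with
    | zero =>
      intro p h0 hm _ _
      simpa using hB ⟨p, ⟨h0, hm⟩, rfl⟩
    | succ t ih =>
      intro p h0 hm
      rw [Function.iterate_succ_apply']
      intro hO hD
      have := pot_step (h.iterate t) (dr_iterate u t) _ ih p h0 hm hO hD
      push_cast; lia
  refine ⟨B.toNat + 1, fun t ht i hi => ?_⟩
  have hdr := dr_iterate u t i
  have hOD : pacT^[t] u i = O ∨ pacT^[t] u i = D := by
    by_contra! hne
    have him : i ≤ m := by
      by_contra hlt; exact hne.1 ((h.iterate t).right i (by lia))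
    have h1 := key t i hi him hne.1 hne.2
    have h2 := pot_nonneg (pacT^[t] u i) (doors_nonneg u i) hi him
    lia
  unfold base
  rw [← hdr]
  rcases hOD with e | e <;> rw [e] <;> rfl

/-! ### Coordinates `≥ 0` evolve autonomously -/

/-- Equality on coordinates `≥ 0`, with only left-moving symbols on coordinates `< 0`. -/
structure HalfEq (u v : PacX) : Prop where
  left : ∀ i < 0, lm (u i)
  left' : ∀ i < 0, lm (v i)
  eq : ∀ i, 0 ≤ i → u i = v i

lemma HalfEq.iterate {u v : PacX} (h : HalfEq u v) (t : ℕ) :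
    HalfEq (pacT^[t] u) (pacT^[t] v) := by
  induction t with
  | zero => exact h
  | succ t ih =>
    rw [Function.iterate_succ_apply', Function.iterate_succ_apply']
    refine ⟨fun i hi => lm_rule _ _ _ (ih.left _ (by lia)) (ih.left _ hi),
      fun i hi => lm_rule _ _ _ (ih.left' _ (by lia)) (ih.left' _ hi), fun i hi => ?_⟩
    rw [pacT, pacT, ih.eq i hi, ih.eq (i + 1) (by lia)]
    by_cases h0 : 0 ≤ i - 1
    · rw [ih.eq _ h0]
    · exact rule_congr_left _ _ _ _ (ih.left _ (by lia)) (ih.left' _ (by lia))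

/-! ### Passage of a single particle through empty doors -/

/-- The orbit of `u` differs from `b` at coordinate `0` at some time. -/
def Hits (b u : PacX) : Prop := ∃ n : ℕ, pacT^[n] u 0 ≠ b 0

lemma Hits.of_step {b u v : PacX} (h : Hits b v) (e : pacT u = v) : Hits b u := by
  obtain ⟨n, hn⟩ := h
  exact ⟨n + 1, by rwa [Function.iterate_succ_apply, e]⟩

lemma Hits.zero {b : PacX} {s : PacSym} (h : s ≠ b 0) : Hits b (Function.update b 0 s) :=
  ⟨0, by simpa using h⟩

/-- One step of a single particle, reduced to the three cells whose neighbourhood contains it. -/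
lemma step_update {b : PacX} (hb : ∀ i, b i = O ∨ b i = D) (p q : ℤ) (s s' : PacSym)
    (hq : q = p - 1 ∨ q = p ∨ q = p + 1)
    (h1 : pacRule (b (p - 2)) (b (p - 1)) s = Function.update b q s' (p - 1))
    (h2 : pacRule (b (p - 1)) s (b (p + 1)) = Function.update b q s' p)
    (h3 : pacRule s (b (p + 1)) (b (p + 2)) = Function.update b q s' (p + 1)) :
    pacT (Function.update b p s) = Function.update b q s' := by
  funext i
  unfold pacT
  by_cases c1 : i = p - 1
  · subst c1
    rw [← h1, sub_add_cancel, Function.update_self, Function.update_of_ne (by lia),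
      Function.update_of_ne (by lia), sub_sub]
    rfl
  by_cases c2 : i = p
  · subst c2
    rw [← h2, Function.update_self, Function.update_of_ne (by lia),
      Function.update_of_ne (by lia)]
  by_cases c3 : i = p + 1
  · subst c3
    rw [← h3, add_sub_cancel_right, Function.update_self, Function.update_of_ne (by lia),
      Function.update_of_ne (by lia), add_assoc]
    rfl
  rw [Function.update_of_ne (by lia), Function.update_of_ne (by lia),
    Function.update_of_ne (by lia), Function.update_of_ne (by lia)]
  rcases hb (i - 1) with e | e <;> rcases hb i with e' | e' <;> rcases hb (i + 1) with e'' | e'' <;>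
    rw [e, e', e''] <;> decide

lemma step_left {b : PacX} (hb : ∀ i, b i = O ∨ b i = D) (p : ℤ) (s s' : PacSym)
    (h1 : pacRule (b (p - 2)) (b (p - 1)) s = s')
    (h2 : pacRule (b (p - 1)) s (b (p + 1)) = b p)
    (h3 : pacRule s (b (p + 1)) (b (p + 2)) = b (p + 1)) :
    pacT (Function.update b p s) = Function.update b (p - 1) s' :=
  step_update hb p _ s s' (by simp) (by simp [h1])
    (by rw [h2, Function.update_of_ne (by lia)]) (by rw [h3, Function.update_of_ne (by lia)])

lemma step_stay {b : PacX} (hb : ∀ i, b i = O ∨ b i = D) (p : ℤ) (s s' : PacSym)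
    (h1 : pacRule (b (p - 2)) (b (p - 1)) s = b (p - 1))
    (h2 : pacRule (b (p - 1)) s (b (p + 1)) = s')
    (h3 : pacRule s (b (p + 1)) (b (p + 2)) = b (p + 1)) :
    pacT (Function.update b p s) = Function.update b p s' :=
  step_update hb p _ s s' (by simp) (by rw [h1, Function.update_of_ne (by lia)])
    (by simp [h2]) (by rw [h3, Function.update_of_ne (by lia)])

lemma step_right {b : PacX} (hb : ∀ i, b i = O ∨ b i = D) (p : ℤ) (s s' : PacSym)
    (h1 : pacRule (b (p - 2)) (b (p - 1)) s = b (p - 1))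
    (h2 : pacRule (b (p - 1)) s (b (p + 1)) = b p)
    (h3 : pacRule s (b (p + 1)) (b (p + 2)) = s') :
    pacT (Function.update b p s) = Function.update b (p + 1) s' :=
  step_update hb p _ s s' (by simp) (by rw [h1, Function.update_of_ne (by lia)])
    (by rw [h2, Function.update_of_ne (by lia)]) (by simp [h3])

/-- A pacman runs right to the cell `r` next to the door `r + 1` and becomes a keymaster there. -/
lemma hits_pacman {b : PacX} (hb : ∀ i, b i = O ∨ b i = D) (r : ℤ) (hr : b (r + 1) = D)
    (hK : Hits b (Function.update b r K)) (n : ℕ) :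
    ∀ q, q + n = r → (∀ i, q ≤ i → i ≤ r → b i = O) → Hits b (Function.update b q P) := by
  induction n with
  | zero =>
    intro q hq _
    obtain rfl : q = r := by simpa using hq
    refine hK.of_step (step_stay hb q P K ?_ ?_ ?_)
    · rcases hb (q - 2) with e | e <;> rcases hb (q - 1) with e' | e' <;> rw [e, e'] <;> decide
    · rcases hb (q - 1) with e | e <;> rw [e, hr] <;> decide
    · rcases hb (q + 2) with e | e <;> rw [e, hr] <;> decide
  | succ n ih =>
    intro q hq hO
    push_cast at hq
    have o0 := hO q le_rfl (by lia)
    have o1 := hO (q + 1) (by lia) (by lia)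
    have h1 : pacRule (b (q - 2)) (b (q - 1)) P = b (q - 1) := by
      rcases hb (q - 2) with e | e <;> rcases hb (q - 1) with e' | e' <;> rw [e, e'] <;> decide
    have h2 : pacRule (b (q - 1)) P (b (q + 1)) = b q := by
      rcases hb (q - 1) with e | e <;> rw [e, o0, o1] <;> decide
    rcases hb (q + 2) with o2 | o2
    · refine (ih (q + 1) (by lia) fun i hi => hO i (by lia)).of_step
        (step_right hb q P P h1 h2 ?_)
      rw [o1, o2]; decide
    · -- The pacman meets the door while stepping into the last free cell, so `q + 1 = r`.
      have hqr : q + 1 = r := by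
        by_contra hne
        have := hO (q + 2) (by lia) (by lia)
        rw [o2] at this; cases this
      subst hqr
      refine hK.of_step (step_right hb q P K h1 h2 ?_)
      rw [o1, o2]; decide

/-- A ghost to the left of the door `r + 1` runs left until it reaches coordinate `0` or a door,
where it turns back as a pacman. -/
lemma hits_ghost {b : PacX} (hb : ∀ i, b i = O ∨ b i = D)
    (r : ℤ) (hr : b (r + 1) = D) (hK : Hits b (Function.update b r K)) (n : ℕ) :
    (n : ℤ) ≤ r → (∀ i : ℤ, n ≤ i → i ≤ r → b i = O) → Hits b (Function.update b n G) := by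
  induction n with
  | zero =>
    intro h hO
    refine Hits.zero ?_
    have := hO 0 (by simp) h
    rw [this]; decide
  | succ n ih =>
    intro hn hO
    have o0 := hO _ le_rfl hn
    push_cast at hn hO o0 ⊢
    have h3 : pacRule G (b (n + 1 + 1)) (b (n + 1 + 2)) = b (n + 1 + 1) := by
      rcases hb (n + 1 + 1) with e | e <;> rcases hb (n + 1 + 2) with e' | e' <;>
        rw [e, e'] <;> decide
    have sub1 : ((n : ℤ) + 1 - 1) = n := by lia
    rcases hb (n : ℤ) with o1 | o1
    · have hO' : ∀ i : ℤ, n ≤ i → i ≤ r → b i = O := fun i h1 h2 => by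
        rcases eq_or_lt_of_le h1 with rfl | h1
        · exact o1
        · exact hO i (by lia) h2
      have h2 : pacRule (b ((n : ℤ) + 1 - 1)) G (b (n + 1 + 1)) = b (n + 1) := by
        rcases hb (n + 1 + 1) with e | e <;> rw [sub1, o0, o1, e] <;> decide
      rcases hb ((n : ℤ) + 1 - 2) with o2 | o2
      · refine (ih (by lia) hO').of_step ?_
        rw [step_left hb (n + 1) G G (by rw [o2, sub1, o1]; decide) h2 h3, sub1]
      · refine (hits_pacman hb r hr hK (r - n).toNat n (by lia) hO').of_step ?_
        rw [step_left hb (n + 1) G P (by rw [o2, sub1, o1]; decide) h2 h3, sub1]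
    · refine (hits_pacman hb r hr hK (r - (n + 1)).toNat (n + 1) (by lia) hO).of_step ?_
      refine step_stay hb (n + 1) G P ?_ ?_ h3
      · rcases hb ((n : ℤ) + 1 - 2) with e | e <;> rw [e, sub1, o1] <;> decide
      · rcases hb (n + 1 + 1) with e | e <;> rw [sub1, o1, e] <;> decide

/-- A keymaster, or a ghost inside a door, at position `n ≥ 0` eventually changes coordinate `0`. -/
lemma hits_keymaster {b : PacX} (hb : ∀ i, b i = O ∨ b i = D) (n : ℕ) :
    (b n = O → Hits b (Function.update b n K)) ∧ (b n = D → Hits b (Function.update b n E)) := by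
  induction n with
  | zero =>
    constructor <;> intro h <;> refine Hits.zero ?_ <;> rw [Nat.cast_zero] at h <;> rw [h] <;>
      decide
  | succ n ih =>
    have sub1 : ((n : ℤ) + 1 - 1) = n := by lia
    push_cast
    constructor <;> intro o0
    · have h3 : pacRule K (b (n + 1 + 1)) (b (n + 1 + 2)) = b (n + 1 + 1) := by
        rcases hb (n + 1 + 1) with e | e <;> rcases hb (n + 1 + 2) with e' | e' <;>
          rw [e, e'] <;> decide
      have h2 : pacRule (b ((n : ℤ) + 1 - 1)) K (b (n + 1 + 1)) = b (n + 1) := by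
        rcases hb (n : ℤ) with e | e <;> rcases hb (n + 1 + 1) with e' | e' <;>
          rw [sub1, o0, e, e'] <;> decide
      rcases hb (n : ℤ) with o1 | o1
      · refine (ih.1 o1).of_step ?_
        rw [step_left hb (n + 1) K K ?_ h2 h3, sub1]
        rcases hb ((n : ℤ) + 1 - 2) with e | e <;> rw [e, sub1, o1] <;> decide
      · refine (ih.2 o1).of_step ?_
        rw [step_left hb (n + 1) K E ?_ h2 h3, sub1]
        rcases hb ((n : ℤ) + 1 - 2) with e | e <;> rw [e, sub1, o1] <;> decide
    · have h3 : pacRule E (b (n + 1 + 1)) (b (n + 1 + 2)) = b (n + 1 + 1) := by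
        rcases hb (n + 1 + 1) with e | e <;> rcases hb (n + 1 + 2) with e' | e' <;>
          rw [e, e'] <;> decide
      have h2 : pacRule (b ((n : ℤ) + 1 - 1)) E (b (n + 1 + 1)) = b (n + 1) := by
        rcases hb (n : ℤ) with e | e <;> rcases hb (n + 1 + 1) with e' | e' <;>
          rw [sub1, o0, e, e'] <;> decide
      rcases hb (n : ℤ) with o1 | o1
      · have hG : Hits b (Function.update b n G) :=
          hits_ghost hb n o0 (ih.1 o1) n le_rfl fun i h1 h2 => by
            rw [le_antisymm h2 h1, o1]
        refine hG.of_step ?_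
        rw [step_left hb (n + 1) E G ?_ h2 h3, sub1]
        rcases hb ((n : ℤ) + 1 - 2) with e | e <;> rw [e, sub1, o1] <;> decide
      · refine (ih.2 o1).of_step ?_
        rw [step_left hb (n + 1) E E ?_ h2 h3, sub1]
        rcases hb ((n : ℤ) + 1 - 2) with e | e <;> rw [e, sub1, o1] <;> decide

lemma base_fixed (u : PacX) (t : ℕ) : pacT^[t] (base u) = base u := by
  refine Function.iterate_fixed ?_ t
  funext i
  unfold pacT
  rcases base_cases u (i - 1) with e | e <;> rcases base_cases u i with e' | e' <;>
    rcases base_cases u (i + 1) with e'' | e'' <;> rw [e, e', e''] <;> decide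

/-! ### Transport of the keymaster to the last door -/

lemma transport_step {m : ℤ} {u : PacX} (h : Good m u) (q : ℤ) (hq : m + 1 < q) :
    pacT (Function.update u q K) = Function.update (pacT u) (q - 1) K := by
  have o0 := h.right q (by lia)
  have o1 := h.right (q - 1) (by lia)
  have r1 := h.right (q + 1) (by lia)
  have r2 := h.right (q + 1 + 1) (by lia)
  have o2 : u (q - 1 - 1) = O ∨ u (q - 1 - 1) = D := by
    rcases eq_or_lt_of_le (show m ≤ q - 1 - 1 by lia) with e | e
    · right; rw [← e, h.door]
    · left; exact h.right _ e
  funext i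
  by_cases c1 : i = q - 1
  · subst c1
    rw [Function.update_self]
    unfold pacT
    rw [sub_add_cancel, Function.update_self, Function.update_of_ne (by lia),
      Function.update_of_ne (by lia), o1]
    rcases o2 with e | e <;> rw [e] <;> decide
  rw [Function.update_of_ne c1]
  unfold pacT
  by_cases c2 : i = q
  · subst c2
    rw [Function.update_self, Function.update_of_ne (by lia), Function.update_of_ne (by lia),
      o0, o1, r1]
    decide
  by_cases c3 : i = q + 1
  · subst c3
    rw [add_sub_cancel_right, Function.update_self, Function.update_of_ne (by lia),
      Function.update_of_ne (by lia), o0, r1, r2]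
    decide
  rw [Function.update_of_ne (by lia), Function.update_of_ne (by lia),
    Function.update_of_ne (by lia)]

lemma xPt_eq (w : List PacSym) (i : ℕ) :
    xPt w i = Function.update (yPt w) ((w.length : ℤ) + 1 + i) K := by
  funext j
  by_cases c : j = (w.length : ℤ) + 1 + i
  · subst c
    rw [Function.update_self]
    unfold xPt
    rw [if_neg (by lia), if_neg (by lia), if_pos rfl]
  · rw [Function.update_of_ne c]
    unfold xPt yPt
    rw [if_neg c]

lemma iterate_xPt (w : List PacSym) (i t : ℕ) (ht : t ≤ i) :
    pacT^[t] (xPt w i) =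
      Function.update (pacT^[t] (yPt w)) ((w.length : ℤ) + 1 + i - t) K := by
  induction t with
  | zero => simp [xPt_eq]
  | succ t ih =>
    rw [Function.iterate_succ_apply', Function.iterate_succ_apply', ih (by lia),
      transport_step ((good_yPt w).iterate t) _ (by lia)]
    congr 1
    push_cast; ring

lemma pdist_eq_one {x y : PacX} (h : x 0 ≠ y 0) : pdist x y = 1 := by
  unfold pdist
  rw [if_neg fun e => h (congrFun e 0)]
  have : sInf {n : ℕ | ∃ j : ℤ, j.natAbs = n ∧ x j ≠ y j} = 0 :=
    Nat.sInf_eq_zero.2 (Or.inl ⟨0, rfl, h⟩)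
  simp [this]

/-- For `x = ⋯0.w D 0⋯` and `y^i = ⋯0.w D 0^i K 0⋯`, there exist `N, M ≥ 0` such that
`d(T^{N+j} x, T^{N+j} y^{M+j}) = 1` for all `j ≥ 0`. -/
theorem pacman_orbits_separate (w : List PacSym) :
    ∃ N M : ℕ, ∀ j : ℕ,
      pdist (pacT^[N + j] (yPt w)) (pacT^[N + j] (xPt w (M + j))) = 1 := by
  have hg := good_yPt w
  obtain ⟨N₀, hN⟩ := cleaning hg
  have hneg : ∀ i < 0, base (yPt w) i = O := fun i hi => by
    unfold base
    rcases hg.neg i hi with e | e | e <;> rw [e] <;> rfl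
  have hm : base (yPt w) ((w.length + 1 : ℕ) : ℤ) = O := by
    unfold base
    rw [hg.right _ (by push_cast; lia)]; rfl
  obtain ⟨C, hC⟩ := (hits_keymaster (base_cases (yPt w)) (w.length + 1)).1 hm
  refine ⟨N₀ + C, N₀, fun j => pdist_eq_one ?_⟩
  have half : HalfEq (pacT^[N₀ + j] (xPt w (N₀ + j)))
      (Function.update (base (yPt w)) ((w.length + 1 : ℕ) : ℤ) K) := by
    rw [iterate_xPt w _ _ le_rfl, add_sub_cancel_right]
    push_cast
    refine ⟨fun i hi => ?_, fun i hi => ?_, fun i hi => ?_⟩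
    · rw [Function.update_of_ne (by lia)]
      exact (hg.iterate _).neg i hi
    · rw [Function.update_of_ne (by lia)]
      exact Or.inl (hneg i hi)
    · by_cases c : i = (w.length : ℤ) + 1
      · subst c; simp
      · rw [Function.update_of_ne c, Function.update_of_ne c, hN _ (by lia) i hi]
  have e : N₀ + C + j = C + (N₀ + j) := by lia
  rw [hN (N₀ + C + j) (by lia) 0 le_rfl, e, Function.iterate_add_apply,
    (half.iterate C).eq 0 le_rfl]
  exact hC.symm
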